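/- Every 1-dimensional matroid complex Δ is isomorphic to a complex of the form S^{m_k}_{v_k} ⋯ S^{m_1}_{v_1} K_s, where K_s is the complete graph on s vertices (the complex of all subsets of size at most 2 of an s-element set), k ≤ s, the v_i are distinct vertices of K_s, and each S^{m_i}_{v_i} is an m_i-fold partial star avoiding v_i. -/

import Mathlib

/-!
In a 1-dimensional matroid complex, being equal or not joined by an edge is an equivalence relation on
the vertices: if `ab` and `bc` are non-edges but `ac` is an edge, the restriction to `{a, b, c}` has
the facets `{a, c}` and `{b}`, contradicting purity. So, writing `r` for the map sending a vertex to
a chosen representative of its class, `Δ` consists of the sets of at most two vertices on which `r`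
is injective, i.e. it is a complete multipartite graph (`exists_rep`).

The restriction to the set `U` of representatives is a complete graph, and a partial star avoiding
`u ∈ U` with new vertices from the class of `u` produces the restriction to the enlarged vertex set
(`partialStar_multi`), since the new vertices have the same neighbours as `u`. Adding in this way
the rest of each class rebuilds `Δ` (`iterStar_multi`), so the isomorphism can be taken
to be the identity.
-/

variable {α : Type*} [DecidableEq α]

/-- A simplicial complex: a collection of finite sets closed under taking subsets. -/
def IsCplx (Δ : Set (Finset α)) : Prop :=
  ∀ F ∈ Δ, ∀ G ⊆ F, G ∈ Δ

/-- Restriction of a complex to a vertex subset `W`. -/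
def cplxRes (Δ : Set (Finset α)) (W : Finset α) : Set (Finset α) :=
  {F | F ∈ Δ ∧ F ⊆ W}

/-- A complex is pure if all faces maximal under inclusion have the same cardinality
(equivalently, the same dimension). -/
def IsPureCplx (Δ : Set (Finset α)) : Prop :=
  ∀ F ∈ Δ, ∀ G ∈ Δ, (∀ H ∈ Δ, F ⊆ H → H = F) → (∀ H ∈ Δ, G ⊆ H → H = G) →
    F.card = G.card

/-- A matroid complex on vertex set `V`: a simplicial complex all of whose
restrictions are pure. -/
def IsMatroidCplx (Δ : Set (Finset α)) (V : Finset α) : Prop :=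
  IsCplx Δ ∧ (∀ F ∈ Δ, F ⊆ V) ∧ ∀ W ⊆ V, IsPureCplx (cplxRes Δ W)

/-- The link of a face `F`: `{G ∈ Δ : F ∩ G = ∅ and F ∪ G ∈ Δ}`. -/
def linkCplx (Δ : Set (Finset α)) (F : Finset α) : Set (Finset α) :=
  {G | G ∈ Δ ∧ F ∩ G = ∅ ∧ F ∪ G ∈ Δ}

/-- The partial star avoiding `v` with new vertices `W`: the faces of `Δ`
together with all sets `E ∪ {w}` with `E ∈ link_Δ(v)` and `w ∈ W`. -/
def partialStar (Δ : Set (Finset α)) (v : α) (W : Finset α) : Set (Finset α) :=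
  Δ ∪ {G | ∃ E ∈ linkCplx Δ {v}, ∃ w ∈ W, G = insert w E}

/-- Iterated partial stars `S_{v_k}^{W_k} ⋯ S_{v_1}^{W_1} Γ`, given as a list
`l = [(v_1, W_1), …, (v_k, W_k)]`. -/
def iterStar (Γ : Set (Finset α)) (l : List (α × Finset α)) : Set (Finset α) :=
  l.foldl (fun Δ p => partialStar Δ p.1 p.2) Γ

/-- All the new vertices added in an iterated partial star. -/
def newVerts (l : List (α × Finset α)) : Finset α :=
  l.foldr (fun p s => p.2 ∪ s) ∅

/-- `Δ` (a complex on vertex set `V`) is isomorphic to `Δ'` (a complex on vertex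
set `V'`): a bijection of the vertex sets carrying faces exactly to faces. -/
def IsoOn {β : Type*} [DecidableEq β] (Δ : Set (Finset α)) (V : Finset α)
    (Δ' : Set (Finset β)) (V' : Finset β) : Prop :=
  ∃ f : α → β, Set.BijOn f ↑V ↑V' ∧ ∀ F : Finset α, F ⊆ V → (F ∈ Δ ↔ F.image f ∈ Δ')

/-- The complete multipartite graph on `X` whose parts are the fibres of `r`, as a complex. -/
def multi (r : α → α) (X : Finset α) : Set (Finset α) :=
  {F | F ⊆ X ∧ F.card ≤ 2 ∧ Set.InjOn r F}

theorem mem_newVerts (l : List (α × Finset α)) (x : α) :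
    x ∈ newVerts l ↔ ∃ p ∈ l, x ∈ p.2 := by
  induction l with
  | nil => simp [newVerts]
  | cons p l ih =>
    have : newVerts (p :: l) = p.2 ∪ newVerts l := rfl
    rw [this, Finset.mem_union, ih]
    simp

/-- A partial star avoiding `v` adds new vertices to the part of `v`. -/
theorem partialStar_multi (r : α → α) (X W : Finset α) (v : α) (hv : v ∈ X)
    (hW : Disjoint W X) (hr : ∀ w ∈ W, r w = r v) :
    partialStar (multi r X) v W = multi r (X ∪ W) := by
  ext F
  constructor
  · rintro (⟨h1, h2, h3⟩ | ⟨E, ⟨⟨hE1, hE2, hE3⟩, hvE, -, hc, hi⟩, w, hw, rfl⟩)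
    · exact ⟨h1.trans Finset.subset_union_left, h2, h3⟩
    · have hvE' : v ∉ E := by
        intro h
        have : v ∈ ({v} : Finset α) ∩ E := by simp [h]
        simp [hvE] at this
      have hwE : w ∉ E := fun h => Finset.disjoint_left.1 hW hw (hE1 h)
      rw [← Finset.insert_eq] at hc hi
      refine ⟨?_, ?_, ?_⟩
      · exact Finset.insert_subset (Finset.mem_union_right _ hw)
          (hE1.trans Finset.subset_union_left)
      · rw [Finset.card_insert_of_notMem hvE'] at hc
        rwa [Finset.card_insert_of_notMem hwE]
      · rw [Finset.coe_insert, Set.injOn_insert (by simpa using hvE')] at hi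
        rw [Finset.coe_insert, Set.injOn_insert (by simpa using hwE), hr w hw]
        exact hi
  · rintro ⟨h1, h2, h3⟩
    by_cases hX : F ⊆ X
    · exact Or.inl ⟨hX, h2, h3⟩
    right
    obtain ⟨w, hwF, hwX⟩ := Finset.not_subset.1 hX
    have hw : w ∈ W := (Finset.mem_union.1 (h1 hwF)).resolve_left hwX
    have hEX : F.erase w ⊆ X := by
      intro x hx
      obtain ⟨hne, hxF⟩ := Finset.mem_erase.1 hx
      refine (Finset.mem_union.1 (h1 hxF)).resolve_right fun hxW => hne ?_
      exact h3 hxF hwF ((hr x hxW).trans (hr w hw).symm)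
    have hvE : v ∉ F.erase w := by
      intro hx
      obtain ⟨hne, hxF⟩ := Finset.mem_erase.1 hx
      exact hne (h3 hxF hwF (hr w hw).symm)
    have hcard := Finset.card_erase_add_one hwF
    have hF : F = insert w (F.erase w) := (Finset.insert_erase hwF).symm
    have h3' := h3
    rw [hF, Finset.coe_insert, Set.injOn_insert (by simp), hr w hw] at h3'
    refine ⟨F.erase w, ⟨⟨hEX, by omega, h3'.1⟩, ?_, ?_, ?_, ?_⟩, w, hw, hF⟩
    · exact Finset.singleton_inter_of_notMem hvE
    · rw [← Finset.insert_eq]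
      exact Finset.insert_subset hv hEX
    · rw [← Finset.insert_eq, Finset.card_insert_of_notMem hvE]
      omega
    · rw [← Finset.insert_eq, Finset.coe_insert, Set.injOn_insert (Finset.mem_coe.not.2 hvE)]
      exact h3'

theorem iterStar_multi (r : α → α) (l : List (α × Finset α)) (X : Finset α)
    (h1 : ∀ p ∈ l, p.1 ∈ X) (h2 : ∀ p ∈ l, Disjoint p.2 X)
    (h3 : l.Pairwise (fun p q => Disjoint p.2 q.2))
    (h4 : ∀ p ∈ l, ∀ w ∈ p.2, r w = r p.1) :
    iterStar (multi r X) l = multi r (X ∪ newVerts l) := by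
  induction l generalizing X with
  | nil => simp [iterStar, newVerts]
  | cons p l ih =>
    have hs : iterStar (multi r X) (p :: l) = iterStar (partialStar (multi r X) p.1 p.2) l := rfl
    have hn : newVerts (p :: l) = p.2 ∪ newVerts l := rfl
    simp only [List.forall_mem_cons, List.pairwise_cons] at h1 h2 h3 h4
    rw [hs, hn, partialStar_multi r X p.2 p.1 h1.1 h2.1 h4.1, ← Finset.union_assoc]
    refine ih _ (fun q hq => Finset.mem_union_left _ (h1.2 q hq)) (fun q hq => ?_) h3.2 h4.2
    exact Finset.disjoint_union_right.2 ⟨h2.2 q hq, (h3.1 q hq).symm⟩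

/-- Purity of the restriction to `{a, b, c}` makes non-adjacency transitive. -/
theorem nonadj_trans {Δ : Set (Finset α)} {V : Finset α} (hΔ : IsMatroidCplx Δ V)
    (hvert : ∀ v ∈ V, ({v} : Finset α) ∈ Δ) (hdim : ∀ F ∈ Δ, F.card ≤ 2)
    {a b c : α} (ha : a ∈ V) (hb : b ∈ V) (hc : c ∈ V) (hac : a ≠ c)
    (h1 : ({a, b} : Finset α) ∉ Δ) (h2 : ({b, c} : Finset α) ∉ Δ) : ({a, c} : Finset α) ∉ Δ := by
  intro h
  have hW : ({a, b, c} : Finset α) ⊆ V := by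
    intro x hx
    simp only [Finset.mem_insert, Finset.mem_singleton] at hx
    rcases hx with rfl | rfl | rfl <;> assumption
  have key := hΔ.2.2 _ hW {a, c} ⟨h, by grind⟩ {b} ⟨hvert b hb, by simp⟩ ?_ ?_
  · rw [Finset.card_pair hac] at key
    simp at key
  · rintro H ⟨hH, -⟩ hs
    refine (Finset.eq_of_subset_of_card_le hs ?_).symm
    rw [Finset.card_pair hac]
    exact hdim H hH
  · rintro H ⟨hH, hHW⟩ hs
    have hbH : b ∈ H := hs (by simp)
    have haH : a ∉ H := fun haH => h1 (hΔ.1 H hH _ (by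
      intro x hx; simp at hx; rcases hx with rfl | rfl <;> assumption))
    have hcH : c ∉ H := fun hcH => h2 (hΔ.1 H hH _ (by
      intro x hx; simp at hx; rcases hx with rfl | rfl <;> assumption))
    grind

/-- A 1-dimensional matroid complex is complete multipartite: here `r` sends a vertex to the
representative of its part. -/
theorem exists_rep (Δ : Set (Finset α)) (V : Finset α)
    (hΔ : IsMatroidCplx Δ V) (hvert : ∀ v ∈ V, ({v} : Finset α) ∈ Δ)
    (hdim : ∀ F ∈ Δ, F.card ≤ 2) (hdim' : ∃ F ∈ Δ, F.card = 2) :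
    ∃ r : α → α, (∀ x ∈ V, r x ∈ V) ∧ (∀ x, r (r x) = r x) ∧ Δ = multi r V := by
  -- The relation is extended by equality outside `V`, to be a setoid on all of `α`.
  let S : Setoid α :=
    { r := fun a b => a = b ∨ a ∈ V ∧ b ∈ V ∧ ({a, b} : Finset α) ∉ Δ
      iseqv :=
        { refl := fun a => Or.inl rfl
          symm := by
            rintro a b (rfl | ⟨ha, hb, h⟩)
            · exact Or.inl rfl
            · exact Or.inr ⟨hb, ha, by rwa [Finset.pair_comm]⟩
          trans := by
            rintro a b c (rfl | ⟨ha, hb, h⟩) (rfl | ⟨hb', hc, h'⟩)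
            · exact Or.inl rfl
            · exact Or.inr ⟨hb', hc, h'⟩
            · exact Or.inr ⟨ha, hb, h⟩
            · by_cases hac : a = c
              · exact Or.inl hac
              · exact Or.inr ⟨ha, hc, nonadj_trans hΔ hvert hdim ha hb hc hac h h'⟩ } }
  let r : α → α := fun x => (Quotient.mk S x).out
  have hrel : ∀ x, r x = x ∨ r x ∈ V ∧ x ∈ V ∧ ({r x, x} : Finset α) ∉ Δ :=
    fun x => Quotient.mk_out (s := S) x
  have hr : ∀ x y, r x = r y ↔ (x = y ∨ x ∈ V ∧ y ∈ V ∧ ({x, y} : Finset α) ∉ Δ) := by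
    intro x y
    exact Quotient.out_inj.trans Quotient.eq
  refine ⟨r, ?_, ?_, ?_⟩
  · intro x hx
    rcases hrel x with h | h
    · rwa [h]
    · exact h.1
  · intro x
    exact (hr _ _).2 (hrel x)
  ext F
  constructor
  · intro hF
    refine ⟨hΔ.2.1 F hF, hdim F hF, ?_⟩
    intro x hx y hy hxy
    rcases (hr x y).1 hxy with h | ⟨-, -, h⟩
    · exact h
    · refine absurd (hΔ.1 F hF _ ?_) h
      intro z hz
      simp only [Finset.mem_insert, Finset.mem_singleton] at hz
      rcases hz with rfl | rfl <;> assumption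
  · rintro ⟨h1, h2, h3⟩
    obtain h | h | h : F.card = 0 ∨ F.card = 1 ∨ F.card = 2 := by omega
    · obtain ⟨G, hG, -⟩ := hdim'
      rw [Finset.card_eq_zero.1 h]
      exact hΔ.1 G hG _ (Finset.empty_subset _)
    · obtain ⟨a, rfl⟩ := Finset.card_eq_one.1 h
      exact hvert a (h1 (by simp))
    · obtain ⟨a, b, hab, rfl⟩ := Finset.card_eq_two.1 h
      by_contra hn
      exact hab (h3 (by simp) (by simp)
        ((hr a b).2 (Or.inr ⟨h1 (by simp), h1 (by simp), hn⟩)))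

/-- Every 1-dimensional matroid complex is isomorphic to
`S^{m_k}_{v_k} ⋯ S^{m_1}_{v_1} K_s` with `K_s` a complete graph, `k ≤ s`, and the
`v_i` distinct vertices of `K_s`. -/
theorem dim1_matroid_classification (Δ : Set (Finset α)) (V : Finset α)
    (hΔ : IsMatroidCplx Δ V) (hvert : ∀ v ∈ V, ({v} : Finset α) ∈ Δ)
    (hdim : ∀ F ∈ Δ, F.card ≤ 2) (hdim' : ∃ F ∈ Δ, F.card = 2) :
    ∃ (U : Finset α) (l : List (α × Finset α)),
      (l.map Prod.fst).Nodup ∧ (∀ p ∈ l, p.1 ∈ U) ∧ l.length ≤ U.card ∧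
      (∀ p ∈ l, Disjoint p.2 U) ∧ l.Pairwise (fun p q => Disjoint p.2 q.2) ∧
      IsoOn Δ V (iterStar {F : Finset α | F ⊆ U ∧ F.card ≤ 2} l) (U ∪ newVerts l) := by
  obtain ⟨r, hrV, hrr, rfl⟩ := exists_rep Δ V hΔ hvert hdim hdim'
  have hfix : ∀ x ∈ V.image r, r x = x := by
    intro x hx
    obtain ⟨y, -, rfl⟩ := Finset.mem_image.1 hx
    exact hrr y
  let c : α → α × Finset α := fun u => (u, V.filter fun w => r w = u ∧ w ≠ u)
  have hU : ∀ p ∈ (V.image r).toList.map c, p.1 ∈ V.image r := by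
    intro p hp
    obtain ⟨u, hu, rfl⟩ := List.mem_map.1 hp
    exact Finset.mem_toList.1 hu
  have hdisj : ∀ p ∈ (V.image r).toList.map c, Disjoint p.2 (V.image r) := by
    intro p hp
    obtain ⟨u, hu, rfl⟩ := List.mem_map.1 hp
    refine Finset.disjoint_left.2 fun w hw hwU => ?_
    obtain ⟨-, h1, h2⟩ := Finset.mem_filter.1 hw
    exact h2 ((hfix w hwU).symm.trans h1)
  have hpw : ((V.image r).toList.map c).Pairwise (fun p q => Disjoint p.2 q.2) := by
    rw [List.pairwise_map]
    refine (Finset.nodup_toList (V.image r)).imp fun {a b} hab => ?_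
    refine Finset.disjoint_left.2 fun w hw hw' => hab ?_
    exact (Finset.mem_filter.1 hw).2.1.symm.trans (Finset.mem_filter.1 hw').2.1
  have hclass : ∀ p ∈ (V.image r).toList.map c, ∀ w ∈ p.2, r w = r p.1 := by
    intro p hp w hw
    rw [hfix _ (hU p hp)]
    obtain ⟨u, hu, rfl⟩ := List.mem_map.1 hp
    exact (Finset.mem_filter.1 hw).2.1
  have hK : {F : Finset α | F ⊆ V.image r ∧ F.card ≤ 2} = multi r (V.image r) := by
    ext F
    refine ⟨fun h => ⟨h.1, h.2, fun x hx y hy hxy => ?_⟩, fun h => ⟨h.1, h.2.1⟩⟩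
    rwa [hfix x (h.1 hx), hfix y (h.1 hy)] at hxy
  have hV : V.image r ∪ newVerts ((V.image r).toList.map c) = V := by
    ext x
    rw [Finset.mem_union, mem_newVerts]
    constructor
    · rintro (h | ⟨p, hp, hx⟩)
      · obtain ⟨y, hy, rfl⟩ := Finset.mem_image.1 h
        exact hrV y hy
      · obtain ⟨u, hu, rfl⟩ := List.mem_map.1 hp
        exact (Finset.mem_filter.1 hx).1
    · intro hx
      have hm := Finset.mem_image_of_mem r hx
      by_cases h : r x = x
      · left
        rwa [h] at hm
      · right
        exact ⟨c (r x), List.mem_map_of_mem (Finset.mem_toList.2 hm),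
          Finset.mem_filter.2 ⟨hx, rfl, fun h' => h h'.symm⟩⟩
  refine ⟨V.image r, (V.image r).toList.map c, ?_, hU, by simp, hdisj, hpw, id, ?_, ?_⟩
  · have : Prod.fst ∘ c = id := rfl
    rw [List.map_map, this, List.map_id]
    exact Finset.nodup_toList _
  · rw [hV]
    exact Set.bijOn_id _
  · intro F _
    rw [hK, iterStar_multi r _ _ hU hdisj hpw hclass, hV, Finset.image_id]
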